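/- Let d ≥ 6, let m* = (d-1)/4 if d is prime and m* = (d-1)/3 otherwise, and let m > m* be an integer with m < (d-1)/2. Let V ⊆ {0,...,m} be such that every element of {0,...,m} arises as |j-k| for some j,k in V. Define g in C^d by g_j = 2^j if j in V and g_j = 0 otherwise (for 0 ≤ j ≤ d-1). Then supp(V_g g) = {-m,...,m} × Z_d, where {-m,...,m} is taken modulo d. -/

import Mathlib

open Complex Finset

noncomputable def chi (d : ℕ) (a : ZMod d) : ℂ :=
  Complex.exp (-(2 * (Real.pi : ℂ) * Complex.I * (a.val : ℂ)) / (d : ℂ))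

noncomputable def stft (d : ℕ) [NeZero d] (g f : ZMod d → ℂ) (k l : ZMod d) : ℂ :=
  ∑ j : ZMod d, f j * (starRingEnd ℂ) (g (j - k)) * chi d (j * l)

noncomputable def dft (d : ℕ) [NeZero d] (f : ZMod d → ℂ) (l : ZMod d) : ℂ :=
  ∑ j : ZMod d, f j * chi d (j * l)

noncomputable def ft2 (d : ℕ) [NeZero d] (F : ZMod d → ZMod d → ℂ) (a b : ZMod d) : ℂ :=
  ∑ k : ZMod d, ∑ l : ZMod d, F k l * chi d (a * k + b * l)

/-
Fix `k = p - q` with `p ∈ V` and `q ∈ W`. If `j` and `j - k` have representatives in `V` and `W`,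
then these representatives differ by the integer `p - q`, because `V` and `W` lie in intervals too
short for a wrap-around modulo `d`. So the nonzero terms of the sum defining `stft d g f k l` have
moduli `c * (r * s) ^ j` with `c` independent of `j`, and since `2 ≤ r * s` the term with the
largest `j` exceeds all the others together, whatever the phases are.
-/

theorem sum_pow_lt_pow {R : Type*} [Semiring R] [LinearOrder R] [IsStrictOrderedRing R] {b : R}
    (hb : 2 ≤ b) {n : ℕ} {s : Finset ℕ} (hs : ∀ k ∈ s, k < n) : ∑ k ∈ s, b ^ k < b ^ n := by
  have : 0 < b := two_pos.trans_le hb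
  have range_lt (i : ℕ) : ∑ k ∈ range i, b ^ k < b ^ i := by
    induction i with
    | zero => simp
    | succ i ih =>
      calc ∑ k ∈ range (i + 1), b ^ k = ∑ k ∈ range i, b ^ k + b ^ i := sum_range_succ ..
        _ < b ^ i + b ^ i := by gcongr
        _ = b ^ i * 2 := (mul_two _).symm
        _ ≤ b ^ (i + 1) := by rw [pow_succ]; gcongr
  have subset_range : s ⊆ range n := fun k hk ↦ mem_range.2 (hs k hk)
  calc ∑ k ∈ s, b ^ k ≤ ∑ k ∈ range n, b ^ k :=
        sum_le_sum_of_subset_of_nonneg subset_range fun _ _ _ ↦ by positivity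
    _ < b ^ n := range_lt n

section Dominance

variable {ι E : Type*} [SeminormedAddCommGroup E] {s : Finset ι} {f : ι → E}

theorem sum_ne_zero_of_sum_erase_norm_lt [DecidableEq ι] {i : ι} (hi : i ∈ s)
    (h : ∑ j ∈ s.erase i, ‖f j‖ < ‖f i‖) : ∑ j ∈ s, f j ≠ 0 := by
  intro h0
  have hfi : f i = -∑ j ∈ s.erase i, f j :=
    eq_neg_of_add_eq_zero_left ((add_sum_erase s f hi).trans h0)
  exact h.not_ge (by simpa only [hfi, norm_neg] using norm_sum_le (s.erase i) f)

theorem sum_ne_zero_of_norm_eq_const_mul_pow {v : ι → ℕ} {b c : ℝ} (hs : s.Nonempty)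
    (hv : Set.InjOn v s) (hb : 2 ≤ b) (hc : 0 < c) (hf : ∀ i ∈ s, ‖f i‖ = c * b ^ v i) :
    ∑ i ∈ s, f i ≠ 0 := by
  classical
  obtain ⟨i, hi, hmax⟩ := s.exists_max_image v hs
  have v_lt : ∀ k ∈ (s.erase i).image v, k < v i := by
    simp only [mem_image, mem_erase]
    rintro _ ⟨j, ⟨hne, hj⟩, rfl⟩
    exact (hmax j hj).lt_of_ne (hv.ne hj hi hne)
  refine sum_ne_zero_of_sum_erase_norm_lt hi ?_
  calc ∑ j ∈ s.erase i, ‖f j‖ = c * ∑ j ∈ s.erase i, b ^ v j := by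
        rw [mul_sum]; exact sum_congr rfl fun j hj ↦ hf j (mem_of_mem_erase hj)
    _ = c * ∑ k ∈ (s.erase i).image v, b ^ k := by
        rw [sum_image (hv.mono (by simp))]
    _ < c * b ^ v i := by gcongr; exact sum_pow_lt_pow hb v_lt
    _ = ‖f i‖ := (hf i hi).symm

end Dominance

theorem norm_chi (d : ℕ) (a : ZMod d) : ‖chi d a‖ = 1 := by
  have h : -(2 * (Real.pi : ℂ) * I * a.val) / d = ((-(2 * Real.pi * a.val) / d : ℝ) : ℂ) * I := by
    push_cast; ring
  rw [chi, h, norm_exp_ofReal_mul_I]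

theorem norm_stft_summand {d : ℕ} (f g : ZMod d → ℂ) (j k l : ZMod d) :
    ‖f j * (starRingEnd ℂ) (g (j - k)) * chi d (j * l)‖ = ‖f j‖ * ‖g (j - k)‖ := by
  rw [norm_mul, norm_mul, norm_chi, mul_one, RCLike.norm_conj]

theorem stft_eq_sum_filter {d : ℕ} [NeZero d] {f g : ZMod d → ℂ} {V W : Finset ℕ}
    (hf : ∀ j, j.val ∉ V → f j = 0) (hg : ∀ j, j.val ∉ W → g j = 0) (k l : ZMod d) :
    stft d g f k l = ∑ j with j.val ∈ V ∧ (j - k).val ∈ W,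
      f j * (starRingEnd ℂ) (g (j - k)) * chi d (j * l) := by
  refine (sum_filter_of_ne fun j _ hj ↦ ?_).symm
  contrapose! hj
  by_cases hjV : j.val ∈ V
  · simp [hg _ (hj hjV)]
  · simp [hf j hjV]

theorem val_add_eq_add_val_sub {d m n p q : ℕ} [NeZero d] (hmn : m + n < d) (hp : p ≤ m)
    (hq : q ≤ n) {j : ZMod d} (hj : j.val ≤ m) (hj' : (j - (p - q)).val ≤ n) :
    j.val + q = p + (j - (p - q)).val := by
  have hcast : ((j.val + q : ℕ) : ZMod d) = (p + (j - (p - q)).val : ℕ) := by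
    push_cast [ZMod.natCast_zmod_val]
    ring
  exact ((ZMod.natCast_eq_natCast_iff _ _ _).1 hcast).eq_of_lt_of_lt (by lia) (by lia)

theorem exists_eq_natCast_sub_iff {R : Type*} [AddGroupWithOne R] {m : ℕ} {V : Finset ℕ}
    (hV : V ⊆ range (m + 1)) (hdiff : ∀ i ≤ m, ∃ j ∈ V, ∃ k ∈ V, k ≤ j ∧ j - k = i) (x : R) :
    (∃ p ∈ V, ∃ q ∈ V, x = p - q) ↔ ∃ a : ℤ, |a| ≤ (m : ℤ) ∧ x = a := by
  constructor
  · rintro ⟨p, hp, q, hq, rfl⟩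
    have := mem_range.1 (hV hp)
    have := mem_range.1 (hV hq)
    exact ⟨p - q, abs_le.2 (by lia), by push_cast; rfl⟩
  · rintro ⟨a, ha, rfl⟩
    rw [Int.abs_eq_natAbs, Nat.cast_le] at ha
    obtain ⟨p, hp, q, hq, hqp, hpq⟩ := hdiff a.natAbs ha
    rcases le_total 0 a with ha0 | ha0
    · exact ⟨p, hp, q, hq, by rw [show a = p - q by lia]; push_cast; rfl⟩
    · exact ⟨q, hq, p, hp, by rw [show a = q - p by lia]; push_cast; rfl⟩

theorem stmt8_general {d m n : ℕ} [NeZero d] (hmn : m + n < d) {V W : Finset ℕ}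
    (hV : V ⊆ range (m + 1)) (hW : W ⊆ range (n + 1)) {r s : ℝ} (hs : 0 < s) (hrs : 2 ≤ r * s)
    {f g : ZMod d → ℂ} (hf : ∀ j, ‖f j‖ = if j.val ∈ V then r ^ j.val else 0)
    (hg : ∀ j, ‖g j‖ = if j.val ∈ W then s ^ j.val else 0) (k l : ZMod d) :
    stft d g f k l ≠ 0 ↔ ∃ p ∈ V, ∃ q ∈ W, k = p - q := by
  have le_of_mem_V : ∀ i ∈ V, i ≤ m := fun i hi ↦ mem_range_succ_iff.1 (hV hi)
  have le_of_mem_W : ∀ i ∈ W, i ≤ n := fun i hi ↦ mem_range_succ_iff.1 (hW hi)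
  rw [stft_eq_sum_filter (V := V) (W := W) (fun j hj ↦ by simpa [hj] using hf j)
    (fun j hj ↦ by simpa [hj] using hg j)]
  constructor
  · intro h
    obtain ⟨j, hj, -⟩ := exists_ne_zero_of_sum_ne_zero h
    obtain ⟨hjV, hjW⟩ := (mem_filter.1 hj).2
    exact ⟨j.val, hjV, (j - k).val, hjW, by simp⟩
  · rintro ⟨p, hp, q, hq, rfl⟩
    have hp_lt : p < d := (le_of_mem_V p hp).trans_lt (by lia)
    have hq_lt : q < d := (le_of_mem_W q hq).trans_lt (by lia)
    refine sum_ne_zero_of_norm_eq_const_mul_pow (v := ZMod.val) (c := s ^ q / s ^ p)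
      ⟨p, ?_⟩ (ZMod.val_injective d).injOn hrs (by positivity) fun j hj ↦ ?_
    · simp [ZMod.val_natCast_of_lt hp_lt, ZMod.val_natCast_of_lt hq_lt, hp, hq]
    · obtain ⟨hjV, hjW⟩ := (mem_filter.1 hj).2
      have hval := val_add_eq_add_val_sub hmn (le_of_mem_V p hp) (le_of_mem_W q hq)
        (le_of_mem_V _ hjV) (le_of_mem_W _ hjW)
      have hpow : s ^ j.val * s ^ q = s ^ p * s ^ (j - (p - q)).val := by
        rw [← pow_add, hval, pow_add]
      rw [norm_stft_summand, hf, hg, if_pos hjV, if_pos hjW, mul_pow]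
      field_simp
      linear_combination (-r ^ j.val) * hpow

theorem stmt8 (d m : ℕ) [NeZero d] (hd : 6 ≤ d)
    (hm : if d.Prime then d - 1 < 4 * m else d - 1 < 3 * m)
    (hm2 : 2 * m < d - 1)
    (V : Finset ℕ) (hV : V ⊆ Finset.range (m + 1))
    (hdiff : ∀ i ≤ m, ∃ j ∈ V, ∃ k ∈ V, k ≤ j ∧ j - k = i)
    (g : ZMod d → ℂ) (hg : ∀ j : ZMod d, g j = if j.val ∈ V then (2 : ℂ) ^ j.val else 0) :
    ∀ k l : ZMod d,
      stft d g g k l ≠ 0 ↔ ∃ a : ℤ, |a| ≤ (m : ℤ) ∧ k = (a : ZMod d) := by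
  have hnorm (j : ZMod d) : ‖g j‖ = if j.val ∈ V then 2 ^ j.val else 0 := by
    rw [hg]; split_ifs <;> simp
  exact fun k l ↦ (stmt8_general (by lia) hV hV two_pos (by norm_num) hnorm hnorm k l).trans
    (exists_eq_natCast_sub_iff hV hdiff k)
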